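/- arXiv:2210.14437 — 10 statements merged into one kernel-verified Lean document; each statement's English description precedes it below -/
import Mathlib

section
/- Let u : (Fin K → ℝ) → ℝ be a utility function, let p ∈ ℝ^K with p_k > 0 for all k, let m > 0, λ > 0, and let x̄ ≥ 0 be such that x̄ maximizes the map x ↦ u(x) − λ·⟨p,x⟩ over the nonnegative orthant and ⟨p,x̄⟩ = m. Then the indirect utility v(p,m) := sup { u(x) : x ≥ 0, ⟨p,x⟩ ≤ m } satisfies v(p,m) = λ·m + v̄(λ·p), where v̄ is the Fenchel dual of u. (Lemma 1, equation (4).) -/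
noncomputable section

/-- Inner product on `ℝ^K`. -/
def dot {K : ℕ} (p x : Fin K → ℝ) : ℝ := ∑ k, p k * x k

/-- A utility function: continuous, strictly increasing and strictly concave
on the nonnegative orthant. -/
structure IsUtility {K : ℕ} (u : (Fin K → ℝ) → ℝ) : Prop where
  continuousOn : ContinuousOn u {x : Fin K → ℝ | ∀ k, 0 ≤ x k}
  strictMono : ∀ x y : Fin K → ℝ, (∀ k, 0 ≤ x k) → (∀ k, 0 ≤ y k) →
    (∀ k, x k ≤ y k) → x ≠ y → u x < u y
  strictConcaveOn : StrictConcaveOn ℝ {x : Fin K → ℝ | ∀ k, 0 ≤ x k} u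

/-- The Fenchel dual `v̄(q) = sup { u(x) − ⟨q,x⟩ : x ≥ 0 }`. -/
def fenchelDual {K : ℕ} (u : (Fin K → ℝ) → ℝ) (q : Fin K → ℝ) : ℝ :=
  sSup ((fun x => u x - dot q x) '' {x : Fin K → ℝ | ∀ k, 0 ≤ x k})

/-- The indirect utility `v(p,m) = sup { u(x) : x ≥ 0, ⟨p,x⟩ ≤ m }`. -/
def indirectUtility {K : ℕ} (u : (Fin K → ℝ) → ℝ) (p : Fin K → ℝ) (m : ℝ) : ℝ :=
  sSup (u '' {x : Fin K → ℝ | (∀ k, 0 ≤ x k) ∧ dot p x ≤ m})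

/-- Lagrangian sufficiency; `hslack` is complementary slackness. -/
theorem isMaxOn_setOf_le_of_isMaxOn_sub_mul {α R : Type*} [Ring R] [PartialOrder R]
    [IsOrderedRing R] {f g : α → R} {s : Set α} {a : α} {b c : R} (hc : 0 ≤ c)
    (hslack : c * g a = c * b) (hmax : IsMaxOn (fun x => f x - c * g x) s a) :
    IsMaxOn f {x | x ∈ s ∧ g x ≤ b} a := by
  rintro x ⟨hxs, hxb⟩
  calc
    f x = f x - c * g x + c * g x := (sub_add_cancel _ _).symm
    _ ≤ f a - c * g a + c * b :=
      add_le_add (isMaxOn_iff.1 hmax x hxs) (mul_le_mul_of_nonneg_left hxb hc)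
    _ = f a := by rw [hslack, sub_add_cancel]

theorem sSup_image_eq_of_isMaxOn {α β : Type*} [ConditionallyCompleteLattice β] {f : α → β}
    {s : Set α} {a : α} (ha : a ∈ s) (hmax : IsMaxOn f s a) : sSup (f '' s) = f a :=
  (hmax.isLUB ha).csSup_eq ⟨f a, Set.mem_image_of_mem f ha⟩

section Consumer

variable {K : ℕ} {u : (Fin K → ℝ) → ℝ} {p x : Fin K → ℝ} {m c : ℝ}

theorem dot_const_mul_left (c : ℝ) (p x : Fin K → ℝ) :
    dot (fun k => c * p k) x = c * dot p x := by
  simp only [dot, Finset.mul_sum, mul_assoc]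

theorem fenchelDual_const_mul_eq_of_isMaxOn_sub_mul (hx : ∀ k, 0 ≤ x k)
    (hmax : IsMaxOn (fun y => u y - c * dot p y) {y | ∀ k, 0 ≤ y k} x) :
    fenchelDual u (fun k => c * p k) = u x - c * dot p x := by
  simp only [fenchelDual, dot_const_mul_left]
  exact sSup_image_eq_of_isMaxOn hx hmax

theorem indirectUtility_eq_of_isMaxOn_sub_mul (hc : 0 ≤ c) (hx : ∀ k, 0 ≤ x k)
    (hbudget : dot p x ≤ m) (hslack : c * dot p x = c * m)
    (hmax : IsMaxOn (fun y => u y - c * dot p y) {y | ∀ k, 0 ≤ y k} x) :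
    indirectUtility u p m = u x :=
  sSup_image_eq_of_isMaxOn ⟨hx, hbudget⟩ (isMaxOn_setOf_le_of_isMaxOn_sub_mul hc hslack hmax)

theorem indirect_utility_eq_fenchel_general (hc : 0 ≤ c) (hx : ∀ k, 0 ≤ x k)
    (hbudget : dot p x ≤ m) (hslack : c * dot p x = c * m)
    (hmax : IsMaxOn (fun y => u y - c * dot p y) {y | ∀ k, 0 ≤ y k} x) :
    indirectUtility u p m = c * m + fenchelDual u (fun k => c * p k) := by
  rw [indirectUtility_eq_of_isMaxOn_sub_mul hc hx hbudget hslack hmax,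
    fenchelDual_const_mul_eq_of_isMaxOn_sub_mul hx hmax, hslack, add_sub_cancel]

end Consumer

/-- Lemma 1, equation (4): `v(p,m) = λ·m + v̄(λ·p)`. -/
theorem indirect_utility_eq_fenchel {K : ℕ} (u : (Fin K → ℝ) → ℝ) (hu : IsUtility u)
    (p : Fin K → ℝ) (hp : ∀ k, 0 < p k) (m lam : ℝ) (hm : 0 < m) (hlam : 0 < lam)
    (xbar : Fin K → ℝ) (hxbar : ∀ k, 0 ≤ xbar k)
    (hmax : ∀ x : Fin K → ℝ, (∀ k, 0 ≤ x k) →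
      u x - lam * dot p x ≤ u xbar - lam * dot p xbar)
    (hbudget : dot p xbar = m) :
    indirectUtility u p m = lam * m + fenchelDual u (fun k => lam * p k) :=
  indirect_utility_eq_fenchel_general hlam.le hxbar hbudget.le (by rw [hbudget])
    (isMaxOn_iff.2 hmax)
end
end

section
/- Let u : (Fin K → ℝ) → ℝ be a utility function and p ∈ ℝ^K with p_k > 0 for all k. Suppose that for each m in an open interval I ⊆ (0,∞) there exist λ(m) > 0 and x̄(m) ≥ 0 such that x̄(m) maximizes x ↦ u(x) − λ(m)·⟨p,x⟩ over the nonnegative orthant and ⟨p,x̄(m)⟩ = m. Define v(m) := sup { u(x) : x ≥ 0, ⟨p,x⟩ ≤ m }. Then: (i) for all m, m' ∈ I, v(m') ≤ v(m) + λ(m)·(m' − m), i.e. λ(m) is a supergradient of the concave function v at m; and (ii) if λ is continuous at a point m₀ ∈ I, then v has derivative λ(m₀) at m₀. In particular the Lagrange multiplier equals the marginal utility of income. (Lemma 1: λ_i(p,m_i) = ∂v_i(p,m_i)/∂m_i.) -/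
noncomputable section

/-!
Subtracting the cost `φ (g x)` of the resources used turns a constrained maximum into an
unconstrained one: any `y` has `u y ≤ u x̄ + (φ (g y) - φ (g x̄))`. For `φ` monotone, taking the
supremum over `g y ≤ m'` gives the supergradient inequality for the value function. Two
supergradient inequalities, based at `m₀` and at a nearby `m`, trap the first-order error at `m₀`
between `0` and `(λ m₀ - λ m) (m - m₀)`, which is `o(m - m₀)` when `λ` is continuous at `m₀`.
-/

open Filter Topology

theorem hasFDerivAt_of_continuousAt_supergradient {E : Type*} [NormedAddCommGroup E]
    [NormedSpace ℝ E] {f : E → ℝ} {φ : E → StrongDual ℝ E} {x₀ : E} (hφ : ContinuousAt φ x₀)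
    (h_base : ∀ᶠ x in 𝓝 x₀, f x ≤ f x₀ + φ x₀ (x - x₀))
    (h_near : ∀ᶠ x in 𝓝 x₀, f x₀ ≤ f x + φ x (x₀ - x)) :
    HasFDerivAt f (φ x₀) x₀ := by
  rw [hasFDerivAt_iff_isLittleO, Asymptotics.isLittleO_iff]
  intro ε hε
  filter_upwards [h_base, h_near, Metric.continuousAt_iff'.mp hφ ε hε]
    with x hx_base hx_near hx_dist
  have error_nonpos : f x - f x₀ - φ x₀ (x - x₀) ≤ 0 := by linarith
  rw [Real.norm_of_nonpos error_nonpos]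
  calc -(f x - f x₀ - φ x₀ (x - x₀))
      ≤ φ x₀ (x - x₀) + φ x (x₀ - x) := by linarith
    _ = (φ x - φ x₀) (x₀ - x) := by simp only [sub_apply, map_sub]; ring
    _ ≤ ‖φ x - φ x₀‖ * ‖x₀ - x‖ := (le_abs_self _).trans ((φ x - φ x₀).le_opNorm _)
    _ ≤ ε * ‖x - x₀‖ := by
      rw [← dist_eq_norm, norm_sub_rev]
      gcongr

theorem hasDerivAt_of_continuousAt_supergradient {f f' : ℝ → ℝ} {x₀ : ℝ}
    (hf' : ContinuousAt f' x₀)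
    (h_base : ∀ᶠ x in 𝓝 x₀, f x ≤ f x₀ + f' x₀ * (x - x₀))
    (h_near : ∀ᶠ x in 𝓝 x₀, f x₀ ≤ f x + f' x * (x₀ - x)) :
    HasDerivAt f (f' x₀) x₀ := by
  have hφ : ContinuousAt (fun x ↦ ContinuousLinearMap.toSpanSingleton ℝ (f' x)) x₀ :=
    (ContinuousLinearMap.toSpanSingletonCLE (𝕜 := ℝ) (E := ℝ)).continuous.continuousAt.comp hf'
  refine hasFDerivAt_of_continuousAt_supergradient hφ ?_ ?_ <;>
    simpa only [ContinuousLinearMap.toSpanSingleton_apply, smul_eq_mul, mul_comm]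

section Lagrangian

/-- The optimal value of maximizing `u` over the points of `S` whose resource use `g` is at most
`m`. For `g = ⟨p, ·⟩` on the nonnegative orthant this is the indirect utility at income `m`. The
real supremum makes it `0` where the constraint is infeasible or the objective is unbounded. -/
def valueFunction {α β : Type*} [LE β] (u : α → ℝ) (S : Set α) (g : α → β) (m : β) : ℝ :=
  sSup (u '' {x | x ∈ S ∧ g x ≤ m})

variable {α β : Type*} [Preorder β] {u : α → ℝ} {S : Set α} {g : α → β} {φ : β → ℝ} {x : α}

theorem le_add_sub_of_isMaxOn_lagrangian (hφ : Monotone φ)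
    (hmax : IsMaxOn (fun y ↦ u y - φ (g y)) S x) {y : α} (hy : y ∈ S) {m : β} (hym : g y ≤ m) :
    u y ≤ u x + (φ m - φ (g x)) := by
  have lagrangian_le : u y - φ (g y) ≤ u x - φ (g x) := isMaxOn_iff.mp hmax y hy
  have cost_le : φ (g y) ≤ φ m := hφ hym
  linarith

theorem valueFunction_eq_of_isMaxOn_lagrangian (hφ : Monotone φ) (hx : x ∈ S)
    (hmax : IsMaxOn (fun y ↦ u y - φ (g y)) S x) :
    valueFunction u S g (g x) = u x := by
  refine IsGreatest.csSup_eq ⟨⟨x, ⟨hx, le_rfl⟩, rfl⟩, ?_⟩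
  rintro _ ⟨y, ⟨hy, hyx⟩, rfl⟩
  simpa only [sub_self, add_zero] using le_add_sub_of_isMaxOn_lagrangian hφ hmax hy hyx

theorem valueFunction_le_of_isMaxOn_lagrangian (hφ : Monotone φ) (hx : x ∈ S)
    (hmax : IsMaxOn (fun y ↦ u y - φ (g y)) S x) {m : β} (hm : ∃ y ∈ S, g y ≤ m) :
    valueFunction u S g m ≤ valueFunction u S g (g x) + (φ m - φ (g x)) := by
  rw [valueFunction_eq_of_isMaxOn_lagrangian hφ hx hmax]
  refine csSup_le (Set.Nonempty.image u hm) ?_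
  rintro _ ⟨y, ⟨hy, hym⟩, rfl⟩
  exact le_add_sub_of_isMaxOn_lagrangian hφ hmax hy hym

end Lagrangian

theorem multiplier_is_marginal_utility_of_income_general {α : Type*} {u g : α → ℝ} {S : Set α}
    {I : Set ℝ} (hI : IsOpen I) {lam : ℝ → ℝ} {xbar : ℝ → α}
    (hlam : ∀ m ∈ I, 0 ≤ lam m) (hxS : ∀ m ∈ I, xbar m ∈ S)
    (hmax : ∀ m ∈ I, IsMaxOn (fun x ↦ u x - lam m * g x) S (xbar m))
    (hbud : ∀ m ∈ I, g (xbar m) = m) :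
    (∀ m ∈ I, ∀ m' ∈ I,
      valueFunction u S g m' ≤ valueFunction u S g m + lam m * (m' - m)) ∧
    (∀ m₀ ∈ I, ContinuousAt lam m₀ → HasDerivAt (valueFunction u S g) (lam m₀) m₀) := by
  have supergradient : ∀ m ∈ I, ∀ m' ∈ I,
      valueFunction u S g m' ≤ valueFunction u S g m + lam m * (m' - m) := by
    intro m hm m' hm'
    have cost_mono : Monotone (lam m * ·) := monotone_mul_left_of_nonneg (hlam m hm)
    have feasible : ∃ y ∈ S, g y ≤ m' := ⟨xbar m', hxS m' hm', (hbud m' hm').le⟩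
    simpa only [hbud m hm, mul_sub] using
      valueFunction_le_of_isMaxOn_lagrangian cost_mono (hxS m hm) (hmax m hm) feasible
  refine ⟨supergradient, fun m₀ hm₀ hcont ↦ ?_⟩
  have I_mem : ∀ᶠ m in 𝓝 m₀, m ∈ I := hI.mem_nhds hm₀
  exact hasDerivAt_of_continuousAt_supergradient hcont
    (I_mem.mono (supergradient m₀ hm₀)) (I_mem.mono fun m hm ↦ supergradient m hm m₀ hm₀)

/-- Lemma 1: the Lagrange multiplier `λ(m)` is a supergradient of the indirect
utility `v(p,·)` at `m`, and if `λ` is continuous at `m₀` then `v(p,·)` is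
differentiable at `m₀` with derivative `λ(m₀)` (the marginal utility of income). -/
theorem multiplier_is_marginal_utility_of_income {K : ℕ}
    (u : (Fin K → ℝ) → ℝ) (hu : IsUtility u)
    (p : Fin K → ℝ) (hp : ∀ k, 0 < p k)
    (a b : ℝ) (ha : 0 ≤ a)
    (lam : ℝ → ℝ) (xbar : ℝ → Fin K → ℝ)
    (hlam : ∀ m ∈ Set.Ioo a b, 0 < lam m)
    (hxnn : ∀ m ∈ Set.Ioo a b, ∀ k, 0 ≤ xbar m k)
    (hmax : ∀ m ∈ Set.Ioo a b, ∀ x : Fin K → ℝ, (∀ k, 0 ≤ x k) →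
      u x - lam m * dot p x ≤ u (xbar m) - lam m * dot p (xbar m))
    (hbud : ∀ m ∈ Set.Ioo a b, dot p (xbar m) = m)
    (v : ℝ → ℝ)
    (hv : ∀ m, v m = sSup (u '' {x : Fin K → ℝ | (∀ k, 0 ≤ x k) ∧ dot p x ≤ m})) :
    (∀ m ∈ Set.Ioo a b, ∀ m' ∈ Set.Ioo a b, v m' ≤ v m + lam m * (m' - m)) ∧
    (∀ m₀ ∈ Set.Ioo a b, ContinuousAt lam m₀ → HasDerivAt v (lam m₀) m₀) := by
  obtain rfl : v = valueFunction u {x | ∀ k, 0 ≤ x k} (dot p) := funext hv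
  exact multiplier_is_marginal_utility_of_income_general isOpen_Ioo
    (fun m hm ↦ (hlam m hm).le) hxnn hmax hbud
end
end

section
/- Let u : (Fin K → ℝ) → ℝ be a utility function and p ∈ ℝ^K with p_k > 0 for all k. Suppose λ : (0,∞) → (0,∞) and x̄ : (0,∞) → ℝ^K are such that for every m > 0, x̄(m) ≥ 0 maximizes x ↦ u(x) − λ(m)·⟨p,x⟩ over the nonnegative orthant and ⟨p,x̄(m)⟩ = m. Then λ is strictly antitone: m < m' implies λ(m) > λ(m'). (Lemma 1: the marginal utility of income is strictly positive and strictly decreasing in income.) -/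
noncomputable section

/-!
Subtracting a linear cost from a strictly concave function leaves it strictly concave, so a
maximizer of `f - lam * φ` strictly beats every other point. If `x` and `y` are the maximizers for
the multipliers `lam` and `mu`, adding the two strict inequalities obtained by comparing `x` with
`y` cancels `f` and leaves `0 < (lam - mu) * (φ y - φ x)`.
-/

section StrictConcave

variable {𝕜 E : Type*} [Field 𝕜] [LinearOrder 𝕜] [IsStrictOrderedRing 𝕜] [AddCommMonoid E]
  [Module 𝕜 E]

theorem lt_of_strictConcaveOn_of_isMaxOn {β : Type*} [AddCommMonoid β] [LinearOrder β]
    [IsOrderedAddMonoid β] [Module 𝕜 β] [PosSMulMono 𝕜 β] {s : Set E} {f : E → β} {x y : E}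
    (hf : StrictConcaveOn 𝕜 s f) (hmax : IsMaxOn f s x) (hx : x ∈ s) (hy : y ∈ s) (hne : y ≠ x) :
    f y < f x := by
  refine (hmax hy).lt_of_ne fun heq ↦ hne ?_
  have hmax_y : IsMaxOn f s y := fun z hz ↦ (hmax hz).trans_eq heq.symm
  exact hf.eq_of_isMaxOn hmax_y hmax hy hx

variable {s : Set E} {f : E → 𝕜} {φ : E →ₗ[𝕜] 𝕜}

theorem strictConcaveOn_sub_mul_linearMap (hf : StrictConcaveOn 𝕜 s f) (φ : E →ₗ[𝕜] 𝕜) (lam : 𝕜) :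
    StrictConcaveOn 𝕜 s fun z ↦ f z - lam * φ z :=
  hf.sub_convexOn ((lam • φ).convexOn hf.1)

theorem multiplier_lt_of_isMaxOn {x y : E} {lam mu : 𝕜} (hf : StrictConcaveOn 𝕜 s f)
    (hx : x ∈ s) (hy : y ∈ s) (hmax_x : IsMaxOn (fun z ↦ f z - lam * φ z) s x)
    (hmax_y : IsMaxOn (fun z ↦ f z - mu * φ z) s y) (hlt : φ x < φ y) : mu < lam := by
  have hne : x ≠ y := fun h ↦ hlt.ne (congrArg φ h)
  have x_beats_y : f y - lam * φ y < f x - lam * φ x :=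
    lt_of_strictConcaveOn_of_isMaxOn (strictConcaveOn_sub_mul_linearMap hf φ lam) hmax_x hx hy
      hne.symm
  have y_beats_x : f x - mu * φ x < f y - mu * φ y :=
    lt_of_strictConcaveOn_of_isMaxOn (strictConcaveOn_sub_mul_linearMap hf φ mu) hmax_y hy hx hne
  have hprod : 0 < (lam - mu) * (φ y - φ x) := by linarith
  exact sub_pos.mp (pos_of_mul_pos_left hprod (sub_pos.mpr hlt).le)

theorem multiplier_strict_antitone_general {M : Set 𝕜} {lam : 𝕜 → 𝕜} {xbar : 𝕜 → E}
    (hf : StrictConcaveOn 𝕜 s f) (hmem : ∀ m ∈ M, xbar m ∈ s)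
    (hmax : ∀ m ∈ M, IsMaxOn (fun z ↦ f z - lam m * φ z) s (xbar m))
    (hbud : ∀ m ∈ M, φ (xbar m) = m) : StrictAntiOn lam M := by
  intro m hm m' hm' hlt
  have hφ : φ (xbar m) < φ (xbar m') := by rwa [hbud m hm, hbud m' hm']
  exact multiplier_lt_of_isMaxOn hf (hmem m hm) (hmem m' hm') (hmax m hm) (hmax m' hm') hφ

end StrictConcave

/-- Lemma 1: the marginal utility of income is strictly decreasing in income. -/
theorem multiplier_strict_antitone {K : ℕ}
    (u : (Fin K → ℝ) → ℝ) (hu : IsUtility u)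
    (p : Fin K → ℝ) (hp : ∀ k, 0 < p k)
    (lam : ℝ → ℝ) (xbar : ℝ → Fin K → ℝ)
    (hlam : ∀ m, 0 < m → 0 < lam m)
    (hxnn : ∀ m, 0 < m → ∀ k, 0 ≤ xbar m k)
    (hmax : ∀ m, 0 < m → ∀ x : Fin K → ℝ, (∀ k, 0 ≤ x k) →
      u x - lam m * dot p x ≤ u (xbar m) - lam m * dot p (xbar m))
    (hbud : ∀ m, 0 < m → dot p (xbar m) = m) :
    ∀ m m' : ℝ, 0 < m → m < m' → lam m' < lam m := by
  intro m m' hm hlt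
  exact multiplier_strict_antitone_general (φ := dotProductBilin ℝ ℝ p) (M := Set.Ioi 0)
    hu.strictConcaveOn hxnn hmax hbud hm (hm.trans hlt) hlt
end
end

section
/- Let u : (Fin K → ℝ) → ℝ be a utility function with Fenchel dual v̄, let p₀ ∈ ℝ^K with p₀,k > 0 for all k, and suppose the supremum defining v̄(p₀) is attained at x̄₀ ≥ 0. Then: (i) −x̄₀ is a subgradient of the convex function v̄ at p₀, i.e. v̄(q) ≥ v̄(p₀) − ⟨x̄₀, q − p₀⟩ for every q ∈ ℝ^K for which the defining supremum is finite; and (ii) if moreover there is a neighborhood S of p₀ such that for every q ∈ S the supremum defining v̄(q) is attained at a unique point x̄(q) and the map q ↦ x̄(q) is continuous at p₀, then v̄ has gradient −x̄₀ at p₀. (The simplified Roy's identity x̄(p) = −∇v̄(p).) -/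
noncomputable section

/-!
For a maximizer `x̄₀` at `p₀`, the dual lies above the affine function `q ↦ u x̄₀ - ⟨q, x̄₀⟩` and
touches it at `p₀`, which is the subgradient inequality. Writing that inequality once at `p₀` and
once at `q` traps the first-order error:
`0 ≤ v̄ q - v̄ p₀ + ⟨x̄ p₀, q - p₀⟩ ≤ ⟨x̄ p₀ - x̄ q, q - p₀⟩`,
and continuity of `x̄` makes the right-hand side `o(‖q - p₀‖)`. A subgradient at a point of
differentiability is the gradient, so `x̄₀ = x̄ p₀`.
-/

open Filter Topology

section Subgradient

variable {E : Type*} [NormedAddCommGroup E] [NormedSpace ℝ E] {f : E → ℝ} {s : Set E} {p : E}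

/-- `ℓ` is a subgradient of `f` at `p` relative to `s`: the affine function with slope `ℓ` through
`(p, f p)` minorizes `f` on `s`. The set `s` excludes the points at which a real-valued supremum
takes a junk value. -/
def HasSubgradientOn (f : E → ℝ) (s : Set E) (ℓ : E →L[ℝ] ℝ) (p : E) : Prop :=
  ∀ q ∈ s, f p + ℓ (q - p) ≤ f q

theorem HasSubgradientOn.mono {t : Set E} {ℓ : E →L[ℝ] ℝ} (h : HasSubgradientOn f s ℓ p)
    (hts : t ⊆ s) : HasSubgradientOn f t ℓ p :=
  fun q hq => h q (hts hq)

theorem HasSubgradientOn.eq_of_hasFDerivAt {ℓ f' : E →L[ℝ] ℝ} (hs : s ∈ 𝓝 p)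
    (h : HasSubgradientOn f s ℓ p) (hf : HasFDerivAt f f' p) : ℓ = f' := by
  have hmin : IsLocalMin (fun q => f q - ℓ q) p := by
    filter_upwards [hs] with q hq
    have hpq := h q hq
    rw [map_sub] at hpq
    linarith
  exact (sub_eq_zero.mp (hmin.hasFDerivAt_eq_zero (hf.sub ℓ.hasFDerivAt))).symm

theorem HasSubgradientOn.norm_sub_sub_le {ℓ ℓ' : E →L[ℝ] ℝ} {q : E}
    (hp : HasSubgradientOn f s ℓ p) (hq : HasSubgradientOn f s ℓ' q) (hps : p ∈ s) (hqs : q ∈ s) :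
    ‖f q - f p - ℓ (q - p)‖ ≤ ‖ℓ' - ℓ‖ * ‖q - p‖ := by
  have lower : f p + ℓ (q - p) ≤ f q := hp q hqs
  have upper : f q - ℓ' (q - p) ≤ f p := by
    simpa only [← neg_sub q p, map_neg, ← sub_eq_add_neg] using hq p hps
  rw [Real.norm_of_nonneg (by linarith)]
  calc f q - f p - ℓ (q - p)
      ≤ (ℓ' - ℓ) (q - p) := by rw [sub_apply]; linarith
    _ ≤ ‖(ℓ' - ℓ) (q - p)‖ := Real.le_norm_self _
    _ ≤ ‖ℓ' - ℓ‖ * ‖q - p‖ := (ℓ' - ℓ).le_opNorm _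

theorem hasFDerivAt_of_continuousAt_subgradient {f' : E → E →L[ℝ] ℝ} (hs : s ∈ 𝓝 p)
    (hf : ∀ q ∈ s, HasSubgradientOn f s (f' q) q) (hf' : ContinuousAt f' p) :
    HasFDerivAt f (f' p) p := by
  rw [hasFDerivAt_iff_isLittleO, Asymptotics.isLittleO_iff]
  intro c hc
  have hps : p ∈ s := mem_of_mem_nhds hs
  filter_upwards [hs, Metric.tendsto_nhds.mp hf' c hc] with q hqs hclose
  rw [dist_eq_norm] at hclose
  calc ‖f q - f p - f' p (q - p)‖
      ≤ ‖f' q - f' p‖ * ‖q - p‖ := (hf p hps).norm_sub_sub_le (hf q hqs) hps hqs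
    _ ≤ c * ‖q - p‖ := by gcongr

end Subgradient

section AffineEnvelope

variable {E X : Type*} [NormedAddCommGroup E] [NormedSpace ℝ E]
  {A : Set X} {g : X → ℝ} {L : X → E →L[ℝ] ℝ} {p : E} {a : X}

/-- The upper envelope `q ↦ sup_{x ∈ A} (g x + L x q)` of a family of affine functions; it has the
junk value `0` where the supremum is infinite. -/
def affineEnvelope (A : Set X) (g : X → ℝ) (L : X → E →L[ℝ] ℝ) (q : E) : ℝ :=
  sSup ((fun x => g x + L x q) '' A)

/-- The effective domain of `affineEnvelope A g L`: the points where the supremum is finite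
(or `A` is empty). -/
def affineEnvelopeDomain (A : Set X) (g : X → ℝ) (L : X → E →L[ℝ] ℝ) : Set E :=
  {q | BddAbove ((fun x => g x + L x q) '' A)}

theorem affineEnvelope_eq_of_isMaxOn (ha : a ∈ A) (hmax : IsMaxOn (fun x => g x + L x p) A a) :
    affineEnvelope A g L p = g a + L a p := by
  rw [affineEnvelope, sSup_image', hmax.iSup_eq ha]

theorem hasSubgradientOn_affineEnvelope (ha : a ∈ A)
    (hmax : IsMaxOn (fun x => g x + L x p) A a) :
    HasSubgradientOn (affineEnvelope A g L) (affineEnvelopeDomain A g L) (L a) p := by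
  intro q hq
  calc affineEnvelope A g L p + L a (q - p)
      = g a + L a q := by rw [affineEnvelope_eq_of_isMaxOn ha hmax, map_sub]; ring
    _ ≤ affineEnvelope A g L q := le_csSup hq (Set.mem_image_of_mem _ ha)

theorem hasFDerivAt_affineEnvelope {x : E → X} (ha : a ∈ A)
    (hmax : IsMaxOn (fun y => g y + L y p) A a)
    (hx : ∀ᶠ q in 𝓝 p, x q ∈ A ∧ IsMaxOn (fun y => g y + L y q) A (x q))
    (hLx : ContinuousAt (fun q => L (x q)) p) :
    HasFDerivAt (affineEnvelope A g L) (L a) p := by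
  let s : Set E := {q | x q ∈ A ∧ IsMaxOn (fun y => g y + L y q) A (x q)}
  have hs_domain : s ⊆ affineEnvelopeDomain A g L := fun q hq => hq.2.bddAbove
  have hsub : ∀ q ∈ s, HasSubgradientOn (affineEnvelope A g L) s (L (x q)) q :=
    fun q hq => (hasSubgradientOn_affineEnvelope hq.1 hq.2).mono hs_domain
  have hderiv : HasFDerivAt (affineEnvelope A g L) (L (x p)) p :=
    hasFDerivAt_of_continuousAt_subgradient hx hsub hLx
  have ha_sub : HasSubgradientOn (affineEnvelope A g L) s (L a) p :=
    (hasSubgradientOn_affineEnvelope ha hmax).mono hs_domain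
  rwa [ha_sub.eq_of_hasFDerivAt hx hderiv]

end AffineEnvelope

section FenchelDual

variable {K : ℕ}

/-- The linear functional `q ↦ -⟨x, q⟩`, as an element of the dual of `ℝ^K` with the sup norm. -/
def negDotCLM (x : Fin K → ℝ) : (Fin K → ℝ) →L[ℝ] ℝ :=
  ∑ k, (-(x k)) • (ContinuousLinearMap.proj k : (Fin K → ℝ) →L[ℝ] ℝ)

theorem negDotCLM_apply (x q : Fin K → ℝ) : negDotCLM x q = -dot x q := by
  simp [negDotCLM, dot]

theorem continuous_negDotCLM : Continuous (negDotCLM : (Fin K → ℝ) → (Fin K → ℝ) →L[ℝ] ℝ) := by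
  unfold negDotCLM
  fun_prop

theorem dot_comm (p x : Fin K → ℝ) : dot p x = dot x p :=
  dotProduct_comm p x

theorem sub_dot_eq_add_negDotCLM (r : ℝ) (q x : Fin K → ℝ) : r - dot q x = r + negDotCLM x q := by
  rw [negDotCLM_apply, dot_comm q x, sub_eq_add_neg]

theorem fenchelDual_eq_affineEnvelope (u : (Fin K → ℝ) → ℝ) :
    fenchelDual u = affineEnvelope {x : Fin K → ℝ | ∀ k, 0 ≤ x k} u negDotCLM := by
  funext q
  simp only [fenchelDual, affineEnvelope, sub_dot_eq_add_negDotCLM]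

theorem roys_identity_general (u : (Fin K → ℝ) → ℝ) (p0 xbar0 : Fin K → ℝ)
    (hxbar0 : ∀ k, 0 ≤ xbar0 k)
    (hattain : IsMaxOn (fun x => u x - dot p0 x) {x : Fin K → ℝ | ∀ k, 0 ≤ x k} xbar0) :
    (∀ q : Fin K → ℝ,
      BddAbove ((fun x => u x - dot q x) '' {x : Fin K → ℝ | ∀ k, 0 ≤ x k}) →
      fenchelDual u p0 - dot xbar0 (fun k => q k - p0 k) ≤ fenchelDual u q) ∧
    (∀ xb : (Fin K → ℝ) → (Fin K → ℝ),
      (∀ᶠ q in 𝓝 p0, (∀ k, 0 ≤ xb q k) ∧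
        IsMaxOn (fun x => u x - dot q x) {x : Fin K → ℝ | ∀ k, 0 ≤ x k} (xb q)) →
      ContinuousAt xb p0 →
      HasFDerivAt (fenchelDual u)
        (∑ k, (-(xbar0 k)) • (ContinuousLinearMap.proj k : (Fin K → ℝ) →L[ℝ] ℝ)) p0) := by
  simp only [sub_dot_eq_add_negDotCLM] at hattain
  rw [fenchelDual_eq_affineEnvelope]
  refine ⟨fun q hq => ?_, fun xb hxb hcont => ?_⟩
  · simp only [sub_dot_eq_add_negDotCLM] at hq
    rw [sub_eq_add_neg, ← negDotCLM_apply]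
    have hmem : xbar0 ∈ {x : Fin K → ℝ | ∀ k, 0 ≤ x k} := hxbar0
    exact hasSubgradientOn_affineEnvelope hmem hattain q hq
  · simp only [sub_dot_eq_add_negDotCLM] at hxb
    exact hasFDerivAt_affineEnvelope hxbar0 hattain hxb
      (continuous_negDotCLM.continuousAt.comp hcont)

end FenchelDual

/-- Simplified Roy's identity: `−x̄₀` is a subgradient of `v̄` at `p₀`, and under
unique, continuous attainment the Fenchel dual has gradient `−x̄₀` at `p₀`. -/
theorem roys_identity {K : ℕ} (u : (Fin K → ℝ) → ℝ) (hu : IsUtility u)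
    (p0 : Fin K → ℝ) (hp0 : ∀ k, 0 < p0 k)
    (xbar0 : Fin K → ℝ) (hxbar0 : ∀ k, 0 ≤ xbar0 k)
    (hattain : ∀ x : Fin K → ℝ, (∀ k, 0 ≤ x k) →
      u x - dot p0 x ≤ u xbar0 - dot p0 xbar0) :
    (∀ q : Fin K → ℝ,
      BddAbove ((fun x => u x - dot q x) '' {x : Fin K → ℝ | ∀ k, 0 ≤ x k}) →
      fenchelDual u p0 - dot xbar0 (fun k => q k - p0 k) ≤ fenchelDual u q) ∧
    (∀ S : Set (Fin K → ℝ), S ∈ nhds p0 →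
      ∀ xb : (Fin K → ℝ) → (Fin K → ℝ),
      (∀ q ∈ S, (∀ k, 0 ≤ xb q k) ∧
        (∀ x : Fin K → ℝ, (∀ k, 0 ≤ x k) → u x - dot q x ≤ u (xb q) - dot q (xb q)) ∧
        (∀ z : Fin K → ℝ, (∀ k, 0 ≤ z k) →
          (∀ x : Fin K → ℝ, (∀ k, 0 ≤ x k) → u x - dot q x ≤ u z - dot q z) →
          z = xb q)) →
      ContinuousAt xb p0 →
      HasFDerivAt (fenchelDual u)
        (∑ k, (-(xbar0 k)) • (ContinuousLinearMap.proj k : (Fin K → ℝ) →L[ℝ] ℝ)) p0) := by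
  obtain ⟨hsubgradient, hgradient⟩ := roys_identity_general u p0 xbar0 hxbar0 hattain
  exact ⟨hsubgradient, fun S hS xb hxb => hgradient xb <|
    mem_of_superset hS fun q hq => ⟨(hxb q hq).1, (hxb q hq).2.1⟩⟩
end
end

section
/- Let u : (Fin K → ℝ) → ℝ be a utility function that is in addition differentiable on the strictly positive orthant, with Fenchel dual v̄. Let S ⊆ ℝ^K be a convex set of strictly positive price vectors such that for every q ∈ S the supremum defining v̄(q) is attained at some strictly positive point x̄(q). Then v̄ is strictly convex on S: for q ≠ q' in S and t ∈ (0,1), v̄(t·q + (1−t)·q') < t·v̄(q) + (1−t)·v̄(q'). (The dual function of a differentiable strictly concave utility is strictly convex in prices.) -/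
noncomputable section

/-!
Let `z` maximize `u - ⟨m, ·⟩` for the mixed price `m = t q + (1 - t) q'`. Splitting its value along
`m` bounds the dual at `m` by the mixture of the duals at `q` and `q'`. Equality would make `z` a
maximizer for both `q` and `q'`, and the first order condition at the interior point `z` would then
give `q = u'(z) = q'`.
-/

/-- The supremum of `u - p` over `C`: the conjugate of `u` restricted to `C`, as a function of the
price functional `p`. Like any real `sSup` it is `0` when `u - p` is unbounded above on `C`. -/
def conjugateOn {E : Type*} (C : Set E) (u p : E → ℝ) : ℝ :=
  sSup ((fun x => u x - p x) '' C)

section Conjugate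

variable {E : Type*} {C : Set E} {u p : E → ℝ} {z : E}

theorem conjugateOn_eq_of_isMaxOn (hz : z ∈ C) (hmax : IsMaxOn (fun x => u x - p x) C z) :
    conjugateOn C u p = u z - p z :=
  IsGreatest.csSup_eq ⟨Set.mem_image_of_mem _ hz, Set.forall_mem_image.2 hmax⟩

theorem sub_le_conjugateOn (hbdd : BddAbove ((fun x => u x - p x) '' C)) (hz : z ∈ C) :
    u z - p z ≤ conjugateOn C u p :=
  le_csSup hbdd (Set.mem_image_of_mem _ hz)

theorem isMaxOn_of_conjugateOn_le (hbdd : BddAbove ((fun x => u x - p x) '' C))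
    (hle : conjugateOn C u p ≤ u z - p z) : IsMaxOn (fun x => u x - p x) C z :=
  fun _ hx => (sub_le_conjugateOn hbdd hx).trans hle

end Conjugate

section StrictConvexity

open Topology

variable {E F : Type*} [NormedAddCommGroup E] [NormedSpace ℝ E] [AddCommGroup F] [Module ℝ F]
  {C : Set E} {u : E → ℝ} {z : E}

theorem fderiv_eq_of_isLocalMax_sub {p : StrongDual ℝ E} (hu : DifferentiableAt ℝ u z)
    (hmax : IsLocalMax (fun x => u x - p x) z) : fderiv ℝ u z = p :=
  sub_eq_zero.1 (hmax.hasFDerivAt_eq_zero (hu.hasFDerivAt.sub p.hasFDerivAt))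

theorem sub_lt_conjugateOn_or_of_ne {p p' : StrongDual ℝ E} (hne : p ≠ p') (hC : C ∈ 𝓝 z)
    (hu : DifferentiableAt ℝ u z) (hbdd : BddAbove ((fun x => u x - p x) '' C))
    (hbdd' : BddAbove ((fun x => u x - p' x) '' C)) :
    u z - p z < conjugateOn C u p ∨ u z - p' z < conjugateOn C u p' := by
  by_contra! hle
  have hfderiv : fderiv ℝ u z = p :=
    fderiv_eq_of_isLocalMax_sub hu ((isMaxOn_of_conjugateOn_le hbdd hle.1).isLocalMax hC)
  have hfderiv' : fderiv ℝ u z = p' :=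
    fderiv_eq_of_isLocalMax_sub hu ((isMaxOn_of_conjugateOn_le hbdd' hle.2).isLocalMax hC)
  exact hne (hfderiv.symm.trans hfderiv')

theorem fenchelDual_strictConvexOn_general {B : F →ₗ[ℝ] StrongDual ℝ E}
    (hB : Function.Injective B) {S : Set F} (hS : Convex ℝ S)
    (hattain : ∀ q ∈ S, ∃ z, C ∈ 𝓝 z ∧ DifferentiableAt ℝ u z ∧
      IsMaxOn (fun x => u x - B q x) C z) :
    StrictConvexOn ℝ S (fun q => conjugateOn C u (B q)) := by
  refine ⟨hS, fun q hq q' hq' hne a b ha hb hab => ?_⟩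
  have hbdd : ∀ r ∈ S, BddAbove ((fun x => u x - B r x) '' C) := fun r hr =>
    let ⟨_, _, _, hmax⟩ := hattain r hr
    hmax.bddAbove
  obtain ⟨z, hzC, hzu, hmax⟩ := hattain _ (hS hq hq' ha.le hb.le hab)
  have hle := sub_le_conjugateOn (hbdd q hq) (mem_of_mem_nhds hzC)
  have hle' := sub_le_conjugateOn (hbdd q' hq') (mem_of_mem_nhds hzC)
  calc conjugateOn C u (B (a • q + b • q'))
      = u z - B (a • q + b • q') z := conjugateOn_eq_of_isMaxOn (mem_of_mem_nhds hzC) hmax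
    _ = a * (u z - B q z) + b * (u z - B q' z) := by
      simp only [map_add, map_smul, add_apply, smul_apply, smul_eq_mul]
      linear_combination -u z * hab
    _ < a * conjugateOn C u (B q) + b * conjugateOn C u (B q') := by
      rcases sub_lt_conjugateOn_or_of_ne (hB.ne hne) hzC hzu (hbdd q hq) (hbdd q' hq')
        with hlt | hlt'
      · exact add_lt_add_of_lt_of_le (by gcongr) (by gcongr)
      · exact add_lt_add_of_le_of_lt (by gcongr) (by gcongr)

end StrictConvexity

/-- The pairing `dot` as a linear isomorphism of `ℝ^K` with its dual, so that price vectors act as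
continuous linear functionals on bundles. -/
def dotDual (K : ℕ) : (Fin K → ℝ) ≃ₗ[ℝ] StrongDual ℝ (Fin K → ℝ) :=
  dotProductEquiv ℝ (Fin K) ≪≫ₗ LinearMap.toContinuousLinearMap

theorem fenchelDual_eq_conjugateOn {K : ℕ} (u : (Fin K → ℝ) → ℝ) :
    fenchelDual u = fun q => conjugateOn (Set.Ici 0) u (dotDual K q) :=
  rfl

/-- The Fenchel dual of a differentiable strictly concave utility is strictly
convex on a convex set of strictly positive prices with interior attainment. -/
theorem fenchelDual_strictConvexOn {K : ℕ} (u : (Fin K → ℝ) → ℝ) (hu : IsUtility u)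
    (hdiff : ∀ x : Fin K → ℝ, (∀ k, 0 < x k) → DifferentiableAt ℝ u x)
    (S : Set (Fin K → ℝ)) (hconv : Convex ℝ S) (hSpos : ∀ q ∈ S, ∀ k, 0 < q k)
    (hattain : ∀ q ∈ S, ∃ z : Fin K → ℝ, (∀ k, 0 < z k) ∧
      ∀ x : Fin K → ℝ, (∀ k, 0 ≤ x k) → u x - dot q x ≤ u z - dot q z) :
    ∀ q ∈ S, ∀ q' ∈ S, q ≠ q' → ∀ t ∈ Set.Ioo (0:ℝ) 1,
      fenchelDual u (fun k => t * q k + (1 - t) * q' k)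
        < t * fenchelDual u q + (1 - t) * fenchelDual u q' := by
  have hdual : StrictConvexOn ℝ S (fenchelDual u) := by
    rw [fenchelDual_eq_conjugateOn]
    refine fenchelDual_strictConvexOn_general (B := (dotDual K).toLinearMap)
      (dotDual K).injective hconv fun q hq => ?_
    obtain ⟨z, hz, hmax⟩ := hattain q hq
    exact ⟨z, pi_Ici_mem_nhds hz, hdiff z hz, hmax⟩
  exact fun q hq q' hq' hne t ht =>
    hdual.2 hq hq' hne ht.1 (sub_pos.2 ht.2) (add_sub_cancel t 1)
end
end

section
/- (Theorem 1, forward direction.) Consider an exchange economy with N consumers with utility functions u_i and total endowment w ∈ ℝ^K, w_k > 0 for all k. Let (x,p) be a Walrasian equilibrium with incomes m_i > 0 in which markets clear exactly (Σ_i x_i = w), p ≥ 0, ⟨p,x_i⟩ = m_i, and suppose for each i there is a multiplier λ_i > 0 such that x_i maximizes z ↦ u_i(z) − λ_i·⟨p,z⟩ over the nonnegative orthant. Then, setting α_i := 1/λ_i, the potential vanishes: Y_α(x,p,w) = 0. -/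
noncomputable section

/-- The economy's potential
`Y_α(x,p,w) = Σ_i α_i·u_i(x_i) − ⟨p,w⟩ − Σ_i α_i·v̄_i(p/α_i)`. -/
def potential {N K : ℕ} (u : Fin N → (Fin K → ℝ) → ℝ) (α : Fin N → ℝ)
    (x : Fin N → Fin K → ℝ) (p w : Fin K → ℝ) : ℝ :=
  ∑ i, α i * u i (x i) - dot p w -
    ∑ i, α i * fenchelDual (u i) (fun k => p k / α i)

/-!
When markets clear, `⟨p,w⟩ = Σ_i ⟨p,x_i⟩ = Σ_i α_i·⟨p/α_i,x_i⟩`, so the potential is the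
`α`-weighted sum of the consumers' Fenchel–Young gaps at the prices `p/α_i`. The multiplier
condition says that `x_i` attains the supremum defining `v̄_i(λ_i·p)`, and for `α_i = 1/λ_i` we have
`p/α_i = λ_i·p`, so every gap is zero.
-/

lemma dot_eq_dotProduct {K : ℕ} (p x : Fin K → ℝ) : dot p x = p ⬝ᵥ x :=
  rfl

lemma dot_smul_left {K : ℕ} (c : ℝ) (p x : Fin K → ℝ) : dot (c • p) x = c * dot p x := by
  simp only [dot_eq_dotProduct, smul_dotProduct, smul_eq_mul]

lemma dot_sum_right {ι : Type*} {K : ℕ} (s : Finset ι) (p : Fin K → ℝ) (x : ι → Fin K → ℝ) :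
    dot p (∑ i ∈ s, x i) = ∑ i ∈ s, dot p (x i) :=
  dotProduct_sum p s x

lemma fenchelDual_eq_of_isMaxOn {K : ℕ} {u : (Fin K → ℝ) → ℝ} {q x : Fin K → ℝ}
    (hx : ∀ k, 0 ≤ x k) (hmax : IsMaxOn (fun z => u z - dot q z) {z | ∀ k, 0 ≤ z k} x) :
    fenchelDual u q = u x - dot q x := by
  rw [fenchelDual, sSup_image']
  exact hmax.iSup_eq (show x ∈ {z : Fin K → ℝ | ∀ k, 0 ≤ z k} from hx)

/-- The slack in the Fenchel–Young inequality `u x ≤ ⟨q,x⟩ + v̄(q)`, with the sign that makes it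
nonpositive: how far the bundle `x` falls short of the maximal surplus at prices `q`. It is
meaningful only where the supremum defining `v̄(q)` is finite. -/
def fenchelYoungGap {K : ℕ} (u : (Fin K → ℝ) → ℝ) (q x : Fin K → ℝ) : ℝ :=
  u x - dot q x - fenchelDual u q

lemma fenchelYoungGap_eq_zero_of_isMaxOn {K : ℕ} {u : (Fin K → ℝ) → ℝ} {q x : Fin K → ℝ}
    (hx : ∀ k, 0 ≤ x k) (hmax : IsMaxOn (fun z => u z - dot q z) {z | ∀ k, 0 ≤ z k} x) :
    fenchelYoungGap u q x = 0 := by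
  rw [fenchelYoungGap, fenchelDual_eq_of_isMaxOn hx hmax, sub_self]

lemma mul_fenchelYoungGap_inv_smul {K : ℕ} (u : (Fin K → ℝ) → ℝ) {a : ℝ} (ha : a ≠ 0)
    (p x : Fin K → ℝ) :
    a * fenchelYoungGap u (a⁻¹ • p) x = a * u x - dot p x - a * fenchelDual u (a⁻¹ • p) := by
  rw [fenchelYoungGap, dot_smul_left, mul_sub, mul_sub, mul_inv_cancel_left₀ ha]

lemma potential_eq_sum_mul_fenchelYoungGap {N K : ℕ} (u : Fin N → (Fin K → ℝ) → ℝ)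
    {α : Fin N → ℝ} (hα : ∀ i, α i ≠ 0) (x : Fin N → Fin K → ℝ) (p : Fin K → ℝ) :
    potential u α x p (∑ i, x i) = ∑ i, α i * fenchelYoungGap (u i) ((α i)⁻¹ • p) (x i) := by
  have price_eq (i : Fin N) : (fun k => p k / α i) = (α i)⁻¹ • p :=
    funext fun k => div_eq_inv_mul (p k) (α i)
  simp only [potential, price_eq, dot_sum_right, mul_fenchelYoungGap_inv_smul _ (hα _),
    Finset.sum_sub_distrib]

theorem potential_zero_at_walrasian_general {N K : ℕ}
    (u : Fin N → (Fin K → ℝ) → ℝ) (w : Fin K → ℝ)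
    (x : Fin N → Fin K → ℝ) (p : Fin K → ℝ) (lam : Fin N → ℝ)
    (hlam : ∀ i, lam i ≠ 0) (hxnn : ∀ i k, 0 ≤ x i k)
    (hclear : ∀ k, ∑ i, x i k = w k)
    (hmult : ∀ i, ∀ z : Fin K → ℝ, (∀ k, 0 ≤ z k) →
      u i z - lam i * dot p z ≤ u i (x i) - lam i * dot p (x i)) :
    potential u (fun i => 1 / lam i) x p w = 0 := by
  obtain rfl : ∑ i, x i = w := funext fun k => (Finset.sum_apply k _ x).trans (hclear k)
  have gap_eq_zero (i : Fin N) : fenchelYoungGap (u i) (lam i • p) (x i) = 0 := by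
    refine fenchelYoungGap_eq_zero_of_isMaxOn (hxnn i) (isMaxOn_iff.2 fun z hz => ?_)
    simpa only [dot_smul_left] using hmult i z hz
  rw [potential_eq_sum_mul_fenchelYoungGap u fun i => one_div_ne_zero (hlam i)]
  simp only [one_div, inv_inv, gap_eq_zero, mul_zero, Finset.sum_const_zero]

/-- Theorem 1, forward direction: at a Walrasian equilibrium the potential
vanishes for the weights `α_i = 1/λ_i`. -/
theorem potential_zero_at_walrasian {N K : ℕ}
    (u : Fin N → (Fin K → ℝ) → ℝ) (hu : ∀ i, IsUtility (u i))
    (w : Fin K → ℝ) (hw : ∀ k, 0 < w k)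
    (x : Fin N → Fin K → ℝ) (p : Fin K → ℝ) (m lam : Fin N → ℝ)
    (hp : ∀ k, 0 ≤ p k) (hm : ∀ i, 0 < m i) (hlam : ∀ i, 0 < lam i)
    (hxnn : ∀ i k, 0 ≤ x i k)
    (hclear : ∀ k, ∑ i, x i k = w k)
    (hbudget : ∀ i, dot p (x i) = m i)
    (hwalras : ∀ i, ∀ z : Fin K → ℝ, (∀ k, 0 ≤ z k) → dot p z ≤ m i →
      u i z ≤ u i (x i))
    (hmult : ∀ i, ∀ z : Fin K → ℝ, (∀ k, 0 ≤ z k) →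
      u i z - lam i * dot p z ≤ u i (x i) - lam i * dot p (x i)) :
    potential u (fun i => 1 / lam i) x p w = 0 :=
  potential_zero_at_walrasian_general u w x p lam (fun i => (hlam i).ne') hxnn hclear hmult
end
end

section
/- (Corollary 1, first welfare theorem.) Consider an exchange economy with N consumers with utility functions u_i and endowments ω_i ∈ ℝ^K with ω_{ik} > 0 for all i,k; let w := Σ_i ω_i. Let p ≥ 0, p ≠ 0, and let x be a Walrasian equilibrium allocation with incomes m_i := ⟨p,ω_i⟩: each x_i ≥ 0, Σ_i x_i ≤ w, ⟨p,x_i⟩ = m_i, and x_i maximizes u_i over { z ≥ 0 : ⟨p,z⟩ ≤ m_i }. Then x is Pareto optimal: there is no feasible allocation x' (each x'_i ≥ 0, Σ_i x'_i ≤ w) with u_i(x'_i) ≥ u_i(x_i) for all i and u_j(x'_j) > u_j(x_j) for some j. -/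
noncomputable section

/-!
An affordable bundle cannot be strictly preferred to a demanded one, and by local nonsatiation a
bundle costing strictly less than the income cannot even be weakly preferred: some nearby bundle
would still be affordable and strictly better. Summing over the consumers, a Pareto improvement
costs strictly more than the total income, whereas feasibility at nonnegative prices bounds its cost
by the value of the resources.
-/

open Filter Topology

section Demand

variable {E α : Type*} [TopologicalSpace E] [Preorder α] {X : Set E} {u : E → α}

/-- Local nonsatiation of the utility `u` on the consumption set `X`: arbitrarily close to every
bundle of `X` there is a strictly better bundle of `X`. It forces a consumer to pay the whole income
for any bundle as good as the demanded one. -/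
def LocallyNonsatiatedOn (u : E → α) (X : Set E) : Prop :=
  ∀ z ∈ X, ∃ᶠ z' in 𝓝[X] z, u z < u z'

theorem LocallyNonsatiatedOn.of_strictMonoOn [Preorder E] [∀ z : E, (𝓝[>] z).NeBot]
    (hX : IsUpperSet X) (hu : StrictMonoOn u X) : LocallyNonsatiatedOn u X := by
  intro z hz
  have hIoi : Set.Ioi z ⊆ X := fun z' hzz' ↦ hX (le_of_lt hzz') hz
  have hbetter : ∀ᶠ z' in 𝓝[>] z, u z < u z' :=
    eventually_mem_nhdsWithin.mono fun z' hzz' ↦ hu hz (hIoi hzz') hzz'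
  exact hbetter.frequently.filter_mono (nhdsWithin_mono z hIoi)

theorem LocallyNonsatiatedOn.income_le_cost {cost : E → ℝ} {m : ℝ} {a z : E}
    (hu : LocallyNonsatiatedOn u X) (hcost : ContinuousOn cost X)
    (hmax : IsMaxOn u {z ∈ X | cost z ≤ m} a) (hz : z ∈ X) (haz : u a ≤ u z) :
    m ≤ cost z := by
  by_contra! hlt
  have haffordable : ∀ᶠ z' in 𝓝[X] z, z' ∈ X ∧ cost z' < m :=
    eventually_mem_nhdsWithin.and ((hcost z hz).eventually_lt_const hlt)
  obtain ⟨z', hbetter, hz', hcheap⟩ := ((hu z hz).and_eventually haffordable).exists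
  exact (haz.trans_lt hbetter).not_ge (hmax ⟨hz', hcheap.le⟩)

end Demand

theorem income_lt_cost_of_isMaxOn {E α : Type*} [Preorder α] {X : Set E} {u : E → α}
    {cost : E → ℝ} {m : ℝ} {a z : E} (hmax : IsMaxOn u {z ∈ X | cost z ≤ m} a)
    (hz : z ∈ X) (haz : u a < u z) : m < cost z := by
  by_contra! hle
  exact haz.not_ge (hmax ⟨hz, hle⟩)

theorem first_welfare_theorem_general {ι E α : Type*} [Fintype ι] [AddCommMonoid E] [Module ℝ E]
    [TopologicalSpace E] [Preorder E] [Preorder α] {X : ι → Set E} {u : ι → E → α}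
    (hu : ∀ i, LocallyNonsatiatedOn (u i) (X i)) {p : E →L[ℝ] ℝ} (hp : Monotone p)
    {w : E} {m : ι → ℝ} (hm : p w ≤ ∑ i, m i) {x : ι → E}
    (hmax : ∀ i, IsMaxOn (u i) {z ∈ X i | p z ≤ m i} (x i)) :
    ¬ ∃ x' : ι → E, (∀ i, x' i ∈ X i) ∧ ∑ i, x' i ≤ w ∧
      (∀ i, u i (x i) ≤ u i (x' i)) ∧ ∃ j, u j (x j) < u j (x' j) := by
  rintro ⟨x', hX, hfeas, hle, j, hlt⟩
  have hcost_le (i : ι) : m i ≤ p (x' i) :=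
    (hu i).income_le_cost p.continuous.continuousOn (hmax i) (hX i) (hle i)
  have hcost_lt : m j < p (x' j) := income_lt_cost_of_isMaxOn (hmax j) (hX j) hlt
  refine lt_irrefl (∑ i, m i) ?_
  calc ∑ i, m i < ∑ i, p (x' i) :=
        Finset.sum_lt_sum (fun i _ ↦ hcost_le i) ⟨j, Finset.mem_univ j, hcost_lt⟩
    _ = p (∑ i, x' i) := (map_sum p x' Finset.univ).symm
    _ ≤ p w := hp hfeas
    _ ≤ ∑ i, m i := hm

section Euclidean

variable {K : ℕ}

/-- The price functional `dot p`, as a continuous linear map on the commodity space. -/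
def dotCLM (p : Fin K → ℝ) : (Fin K → ℝ) →L[ℝ] ℝ where
  toFun := dot p
  map_add' x y := dotProduct_add p x y
  map_smul' c x := dotProduct_smul c p x
  cont := by unfold dot; fun_prop

theorem monotone_dotCLM {p : Fin K → ℝ} (hp : 0 ≤ p) : Monotone (dotCLM p) :=
  fun _ _ hxy ↦ dotProduct_le_dotProduct_of_nonneg_left hxy hp

theorem IsUtility.strictMonoOn {u : (Fin K → ℝ) → ℝ} (hu : IsUtility u) :
    StrictMonoOn u (Set.Ici 0) :=
  fun x hx y hy hxy ↦ hu.strictMono x y hx hy hxy.le hxy.ne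

theorem IsUtility.locallyNonsatiatedOn [Nonempty (Fin K)] {u : (Fin K → ℝ) → ℝ}
    (hu : IsUtility u) : LocallyNonsatiatedOn u (Set.Ici 0) :=
  .of_strictMonoOn (isUpperSet_Ici 0) hu.strictMonoOn

end Euclidean

/-- Corollary 1, first welfare theorem: a Walrasian equilibrium allocation is
Pareto optimal. -/
theorem first_welfare_theorem {N K : ℕ}
    (u : Fin N → (Fin K → ℝ) → ℝ) (hu : ∀ i, IsUtility (u i))
    (ω : Fin N → Fin K → ℝ) (hω : ∀ i k, 0 < ω i k)
    (w : Fin K → ℝ) (hw : w = ∑ i, ω i)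
    (p : Fin K → ℝ) (hp : ∀ k, 0 ≤ p k) (hpne : p ≠ 0)
    (x : Fin N → Fin K → ℝ) (hx : ∀ i k, 0 ≤ x i k)
    (hfeas : ∀ k, ∑ i, x i k ≤ w k)
    (hbudget : ∀ i, dot p (x i) = dot p (ω i))
    (hmax : ∀ i, ∀ z : Fin K → ℝ, (∀ k, 0 ≤ z k) → dot p z ≤ dot p (ω i) →
      u i z ≤ u i (x i)) :
    ¬ ∃ x' : Fin N → Fin K → ℝ,
      (∀ i k, 0 ≤ x' i k) ∧ (∀ k, ∑ i, x' i k ≤ w k) ∧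
      (∀ i, u i (x i) ≤ u i (x' i)) ∧ (∃ j, u j (x j) < u j (x' j)) := by
  have : Nonempty (Fin K) := (Function.ne_iff.mp hpne).nonempty
  have hincome : dotCLM p w ≤ ∑ i, dot p (ω i) := (hw ▸ map_sum (dotCLM p) ω Finset.univ).le
  simpa only [Set.mem_Ici, Pi.le_def, Pi.zero_apply, Finset.sum_apply] using
    first_welfare_theorem_general (fun i ↦ (hu i).locallyNonsatiatedOn) (monotone_dotCLM hp)
      hincome (fun i z hz ↦ hmax i z hz.1 hz.2)
end
end

section
/- (Equation (13): marginal rates of substitution are equalized at Walrasian prices.) Let u : (Fin K → ℝ) → ℝ be a utility function that is differentiable at a point x̄ with x̄_k > 0 for all k, let p ∈ ℝ^K with p_k > 0 for all k, set m := ⟨p,x̄⟩ > 0, and suppose x̄ maximizes u over the budget set { z ≥ 0 : ⟨p,z⟩ ≤ m }. Then there exists λ > 0 such that the gradient of u at x̄ equals λ·p. Consequently, if two consumers i and j with such utility functions u_i, u_j hold interior Walrasian bundles x̄_i, x̄_j at the same prices p, then for all goods k, ℓ: ∂_k u_i(x̄_i) · ∂_ℓ u_j(x̄_j) = ∂_ℓ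 u_i(x̄_i) · ∂_k u_j(x̄_j). -/
noncomputable section

/-!
The derivative `f'` at the optimum is nonpositive in every direction that does not raise
expenditure, so it vanishes on the kernel of the price functional `p`, and `f' = c • p`.
For the sign of `c`, compare with a strictly better bundle `z`: it is unaffordable, so
`0 < p (z - x)`, while concavity gives `0 < f z - f x ≤ f' (z - x) = c * p (z - x)`.
-/

open AffineMap Filter Topology

theorem exists_eq_smul_of_ker_le_ker {𝕜 V : Type*} [Field 𝕜] [AddCommGroup V] [Module 𝕜 V]
    {p q : V →ₗ[𝕜] 𝕜} (h : p.ker ≤ q.ker) : ∃ c : 𝕜, q = c • p := by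
  have hspan : q ∈ Submodule.span 𝕜 (Set.range fun _ : Unit ↦ p) :=
    mem_span_of_iInf_ker_le_ker (by rwa [iInf_const])
  rw [Set.range_const, Submodule.mem_span_singleton] at hspan
  obtain ⟨c, hc⟩ := hspan
  exact ⟨c, hc.symm⟩

section NormedSpace

variable {E : Type*} [NormedAddCommGroup E] [NormedSpace ℝ E]
  {f g : E → ℝ} {f' g' p : StrongDual ℝ E} {s t : Set E} {x y : E}

theorem sub_le_of_concaveOn_of_hasFDerivWithinAt (hf : ConcaveOn ℝ s f)
    (hf' : HasFDerivWithinAt f f' s x) (hx : x ∈ s) (hy : y ∈ s) : f y - f x ≤ f' (y - x) := by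
  have hderiv : HasDerivWithinAt (f ∘ lineMap x y) (f' (y - x)) (lineMap x y ⁻¹' s) (0 : ℝ) :=
    hf'.comp_hasDerivWithinAt_of_eq 0 hasDerivWithinAt_lineMap (Set.mapsTo_preimage _ _)
      (lineMap_apply_zero x y).symm
  have hslope := (hf.comp_affineMap (lineMap x y)).slope_le_of_hasDerivWithinAt
    (by simpa using hx) (by simpa using hy) zero_lt_one hderiv
  simpa [slope_def_field] using hslope

theorem hasFDerivAt_apply_nonpos_of_isMaxOn_budget (hs : s ∈ 𝓝 x) (hf' : HasFDerivAt f f' x)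
    (hmax : IsMaxOn f {z ∈ s | p z ≤ p x} x) {v : E} (hv : p v ≤ 0) : f' v ≤ 0 := by
  refine hmax.localize.hasFDerivWithinAt_nonpos hf'.hasFDerivWithinAt
    (mem_posTangentConeAt_of_frequently_mem (Eventually.frequently ?_))
  have hline : Tendsto (fun r : ℝ ↦ x + r • v) (𝓝[>] 0) (𝓝 x) :=
    tendsto_nhdsWithin_of_tendsto_nhds (Continuous.tendsto' (by fun_prop) _ _ (by simp))
  filter_upwards [hline hs, self_mem_nhdsWithin] with r hrs hr
  refine ⟨hrs, ?_⟩
  calc p (x + r • v) = p x + r * p v := by simp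
    _ ≤ p x := add_le_of_nonpos_right (mul_nonpos_of_nonneg_of_nonpos (le_of_lt hr) hv)

theorem exists_hasFDerivAt_eq_smul_of_isMaxOn_budget (hs : s ∈ 𝓝 x) (hf' : HasFDerivAt f f' x)
    (hmax : IsMaxOn f {z ∈ s | p z ≤ p x} x) : ∃ c : ℝ, f' = c • p := by
  have hker : p.toLinearMap.ker ≤ f'.toLinearMap.ker := fun v (hv : p v = 0) ↦ by
    have hpos : f' v ≤ 0 := hasFDerivAt_apply_nonpos_of_isMaxOn_budget hs hf' hmax hv.le
    have hneg : f' (-v) ≤ 0 := hasFDerivAt_apply_nonpos_of_isMaxOn_budget hs hf' hmax (by simp [hv])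
    exact le_antisymm hpos (by simpa using hneg)
  obtain ⟨c, hc⟩ := exists_eq_smul_of_ker_le_ker hker
  exact ⟨c, ContinuousLinearMap.coe_injective hc⟩

theorem exists_pos_hasFDerivAt_eq_smul_of_isMaxOn_budget (hf : ConcaveOn ℝ s f) (hs : s ∈ 𝓝 x)
    (hf' : HasFDerivAt f f' x) (hmax : IsMaxOn f {z ∈ s | p z ≤ p x} x)
    (hbetter : p ≠ 0 → ∃ z ∈ s, f x < f z) : ∃ c : ℝ, 0 < c ∧ f' = c • p := by
  obtain ⟨c, rfl⟩ := exists_hasFDerivAt_eq_smul_of_isMaxOn_budget hs hf' hmax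
  rcases eq_or_ne p 0 with rfl | hp
  · exact ⟨1, one_pos, by simp⟩
  obtain ⟨z, hzs, hxz⟩ := hbetter hp
  have hcost : 0 < p (z - x) := by
    by_contra! hle
    rw [map_sub, sub_nonpos] at hle
    exact (hmax ⟨hzs, hle⟩).not_gt hxz
  have hgain : 0 < c * p (z - x) :=
    calc 0 < f z - f x := sub_pos.2 hxz
      _ ≤ c * p (z - x) := sub_le_of_concaveOn_of_hasFDerivWithinAt hf hf'.hasFDerivWithinAt
        (mem_of_mem_nhds hs) hzs
  exact ⟨c, pos_of_mul_pos_left hgain hcost.le, rfl⟩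

theorem marginal_rates_of_substitution_equalized_general
    (hf : ConcaveOn ℝ s f) (hg : ConcaveOn ℝ t g) (hs : s ∈ 𝓝 x) (ht : t ∈ 𝓝 y)
    (hf' : HasFDerivAt f f' x) (hg' : HasFDerivAt g g' y)
    (hfmax : IsMaxOn f {z ∈ s | p z ≤ p x} x) (hgmax : IsMaxOn g {z ∈ t | p z ≤ p y} y)
    (hfbetter : p ≠ 0 → ∃ z ∈ s, f x < f z) (hgbetter : p ≠ 0 → ∃ z ∈ t, g y < g z) :
    (∃ c : ℝ, 0 < c ∧ f' = c • p) ∧ (∃ c : ℝ, 0 < c ∧ g' = c • p) ∧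
      ∀ v w : E, f' v * g' w = f' w * g' v := by
  obtain ⟨a, ha, rfl⟩ := exists_pos_hasFDerivAt_eq_smul_of_isMaxOn_budget hf hs hf' hfmax hfbetter
  obtain ⟨b, hb, rfl⟩ := exists_pos_hasFDerivAt_eq_smul_of_isMaxOn_budget hg ht hg' hgmax hgbetter
  refine ⟨⟨a, ha, rfl⟩, ⟨b, hb, rfl⟩, fun v w ↦ ?_⟩
  simp only [smul_apply, smul_eq_mul]
  ring

end NormedSpace

theorem nonneg_mem_nhds_of_forall_pos {ι : Type*} [Finite ι] {x : ι → ℝ} (hx : ∀ i, 0 < x i) :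
    {z : ι → ℝ | ∀ i, 0 ≤ z i} ∈ 𝓝 x := by
  simpa [Set.pi] using set_pi_mem_nhds Set.finite_univ fun i _ ↦ Ici_mem_nhds (hx i)

section Orthant

variable {K : ℕ} {u : (Fin K → ℝ) → ℝ} {x p : Fin K → ℝ}

/-- The linear functional `dot p`, which sends a bundle to its cost at prices `p`. -/
def expenditure (p : Fin K → ℝ) : StrongDual ℝ (Fin K → ℝ) :=
  ∑ k, p k • ContinuousLinearMap.proj k

theorem expenditure_apply (p z : Fin K → ℝ) : expenditure p z = dot p z := by
  simp [expenditure, dot]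

theorem expenditure_single (p : Fin K → ℝ) (k : Fin K) : expenditure p (Pi.single k 1) = p k := by
  simp [expenditure_apply, dot, Pi.single_apply]

theorem isMaxOn_expenditure_budget
    (hmax : ∀ z : Fin K → ℝ, (∀ k, 0 ≤ z k) → dot p z ≤ dot p x → u z ≤ u x) :
    IsMaxOn u {z ∈ {z | ∀ k, 0 ≤ z k} | expenditure p z ≤ expenditure p x} x := by
  rintro z ⟨hz, hzx⟩
  simp only [expenditure_apply] at hzx
  exact hmax z hz hzx

theorem nonempty_of_expenditure_ne_zero (hp : expenditure p ≠ 0) : Nonempty (Fin K) :=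
  not_isEmpty_iff.1 fun _ ↦ hp (by simp [expenditure])

theorem IsUtility.exists_lt [Nonempty (Fin K)] (hu : IsUtility u) (hx : ∀ k, 0 ≤ x k) :
    ∃ z ∈ {z : Fin K → ℝ | ∀ k, 0 ≤ z k}, u x < u z := by
  have hnonneg : ∀ k, 0 ≤ (x + 1) k := fun k ↦ add_nonneg (hx k) zero_le_one
  exact ⟨x + 1, hnonneg, hu.strictMono x (x + 1) hx hnonneg (by simp) (by simp)⟩

theorem IsUtility.exists_lt_of_expenditure_ne_zero (hu : IsUtility u) (hx : ∀ k, 0 ≤ x k)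
    (hp : expenditure p ≠ 0) : ∃ z ∈ {z : Fin K → ℝ | ∀ k, 0 ≤ z k}, u x < u z :=
  have := nonempty_of_expenditure_ne_zero hp
  hu.exists_lt hx

end Orthant

/-- Equation (13): at an interior Walrasian bundle the gradient of utility is
proportional to prices, so marginal rates of substitution are equalized across
consumers. -/
theorem marginal_rates_of_substitution_equalized {K : ℕ}
    (ui uj : (Fin K → ℝ) → ℝ) (hui : IsUtility ui) (huj : IsUtility uj)
    (p : Fin K → ℝ) (hp : ∀ k, 0 < p k)
    (xi xj : Fin K → ℝ) (hxi : ∀ k, 0 < xi k) (hxj : ∀ k, 0 < xj k)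
    (hdi : DifferentiableAt ℝ ui xi) (hdj : DifferentiableAt ℝ uj xj)
    (hmaxi : ∀ z : Fin K → ℝ, (∀ k, 0 ≤ z k) → dot p z ≤ dot p xi → ui z ≤ ui xi)
    (hmaxj : ∀ z : Fin K → ℝ, (∀ k, 0 ≤ z k) → dot p z ≤ dot p xj → uj z ≤ uj xj) :
    (∃ lam : ℝ, 0 < lam ∧ ∀ k, fderiv ℝ ui xi (Pi.single k 1) = lam * p k) ∧
    (∃ lam : ℝ, 0 < lam ∧ ∀ k, fderiv ℝ uj xj (Pi.single k 1) = lam * p k) ∧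
    ∀ k l : Fin K,
      fderiv ℝ ui xi (Pi.single k 1) * fderiv ℝ uj xj (Pi.single l 1)
        = fderiv ℝ ui xi (Pi.single l 1) * fderiv ℝ uj xj (Pi.single k 1) := by
  obtain ⟨⟨a, ha, hA⟩, ⟨b, hb, hB⟩, hcross⟩ := marginal_rates_of_substitution_equalized_general
    hui.strictConcaveOn.concaveOn huj.strictConcaveOn.concaveOn
    (nonneg_mem_nhds_of_forall_pos hxi) (nonneg_mem_nhds_of_forall_pos hxj)
    hdi.hasFDerivAt hdj.hasFDerivAt
    (isMaxOn_expenditure_budget hmaxi) (isMaxOn_expenditure_budget hmaxj)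
    (hui.exists_lt_of_expenditure_ne_zero fun k ↦ (hxi k).le)
    (huj.exists_lt_of_expenditure_ne_zero fun k ↦ (hxj k).le)
  exact ⟨⟨a, ha, fun k ↦ by simp [hA, expenditure_single]⟩,
    ⟨b, hb, fun k ↦ by simp [hB, expenditure_single]⟩, fun k l ↦ hcross _ _⟩
end
end

section
/- (Example 2: linear-utility economy.) Consider two consumers with u₁(x,y) = log(2x + y) and u₂(x,y) = log(x + 2y) and total endowment w = (1,1). For α ∈ (0,1) define the allocation x₁(α) := (3α, 0) if α ≤ 1/3, (1,0) if 1/3 ≤ α ≤ 2/3, and (1, 3α−2) if α ≥ 2/3; x₂(α) := (1,1) − x₁(α); and the price vector p(α) := (1/3, 2/3) if α ≤ 1/3, (α, 1−α) if 1/3 ≤ α ≤ 2/3, and (2/3, 1/3) if α ≥ 2/3. Then: (i) (x₁(α), x₂(α)) maximizes α·u₁(z₁) + (1−α)·u₂(z₂) over all pairs of nonnegative bundles with z₁ + z₂ ≤ (1,1) componentwise (restricted to bundles where the arguments of the logarithms are positive); and (ii) for each i, x_i(α) maximizes u_i over the budget set { z ≥ 0 : ⟨p(α),z⟩ ≤ ⟨p(α),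 x_i(α)⟩ }, so (x(α), p(α)) is a Walrasian equilibrium with incomes ⟨p(α), x_i(α)⟩. -/
noncomputable section

/-- Inner product on `ℝ²`. -/
def dot2 (p x : ℝ × ℝ) : ℝ := p.1 * x.1 + p.2 * x.2

/-!
The prices are normalised so that the two incomes equal the welfare weights, `⟨p, x₁⟩ = α` and
`⟨p, x₂⟩ = 1 - α`, and each consumer spends only on goods with the best utility per unit of money:
`⟨p, xᵢ⟩ ⟨aᵢ, z⟩ ≤ ⟨aᵢ, xᵢ⟩ ⟨p, z⟩` for all `z ≥ 0`, where `uᵢ = log ⟨aᵢ, ·⟩`. This inequality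
says at once that `xᵢ` is optimal in its budget set and, by concavity of `log`, that
`⟨p, xᵢ⟩ uᵢ(z) ≤ ⟨p, xᵢ⟩ uᵢ(xᵢ) + ⟨p, z⟩ - ⟨p, xᵢ⟩`. Summed over the consumers, the terms
`⟨p, zᵢ⟩ - ⟨p, xᵢ⟩` add up to at most `0` by feasibility, which leaves the welfare inequality.
-/

/-- The bundle `x` attains the largest ratio of value `v` to cost `c` over the consumption set `s`.
The ratios are cross-multiplied so that bundles of zero cost need no special treatment. -/
def IsBestValueOn {E : Type*} (v c : E → ℝ) (s : Set E) (x : E) : Prop :=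
  ∀ z ∈ s, c x * v z ≤ v x * c z

namespace IsBestValueOn

variable {E : Type*} {v c : E → ℝ} {s : Set E} {x z : E}

theorem value_pos (h : IsBestValueOn v c s x) (hcx : 0 < c x) (hz : z ∈ s) (hvz : 0 < v z)
    (hcz : 0 ≤ c z) : 0 < v x :=
  pos_of_mul_pos_left ((mul_pos hcx hvz).trans_le (h z hz)) hcz

theorem value_le_of_cost_le (h : IsBestValueOn v c s x) (hcx : 0 < c x) (hvx : 0 ≤ v x)
    (hz : z ∈ s) (hcz : c z ≤ c x) : v z ≤ v x := by
  refine le_of_mul_le_mul_left ?_ hcx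
  calc c x * v z ≤ v x * c z := h z hz
    _ ≤ v x * c x := mul_le_mul_of_nonneg_left hcz hvx
    _ = c x * v x := mul_comm _ _

theorem log_value_le_of_cost_le (h : IsBestValueOn v c s x) (hcx : 0 < c x) (hvx : 0 ≤ v x)
    (hz : z ∈ s) (hvz : 0 < v z) (hcz : c z ≤ c x) : Real.log (v z) ≤ Real.log (v x) :=
  Real.log_le_log hvz (h.value_le_of_cost_le hcx hvx hz hcz)

theorem cost_mul_log_value_le (h : IsBestValueOn v c s x) (hcx : 0 ≤ c x) (hvx : 0 < v x)
    (hz : z ∈ s) (hvz : 0 < v z) :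
    c x * Real.log (v z) ≤ c x * Real.log (v x) + (c z - c x) := by
  have log_sub_le : Real.log (v z) - Real.log (v x) ≤ v z / v x - 1 := by
    rw [← Real.log_div hvz.ne' hvx.ne']
    exact Real.log_le_sub_one_of_pos (div_pos hvz hvx)
  have cost_mul_ratio_le : c x * (v z / v x) ≤ c z := by
    rw [← mul_div_assoc, div_le_iff₀' hvx]
    exact h z hz
  linarith [mul_le_mul_of_nonneg_left log_sub_le hcx]

end IsBestValueOn

theorem sum_cost_mul_log_value_le {ι E : Type*} {t : Finset ι} {v : ι → E → ℝ} {c : E → ℝ}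
    {s : ι → Set E} {x z : ι → E} (h : ∀ i ∈ t, IsBestValueOn (v i) c (s i) (x i))
    (hcx : ∀ i ∈ t, 0 ≤ c (x i)) (hvx : ∀ i ∈ t, 0 < v i (x i)) (hz : ∀ i ∈ t, z i ∈ s i)
    (hvz : ∀ i ∈ t, 0 < v i (z i)) (hcz : ∑ i ∈ t, c (z i) ≤ ∑ i ∈ t, c (x i)) :
    ∑ i ∈ t, c (x i) * Real.log (v i (z i)) ≤ ∑ i ∈ t, c (x i) * Real.log (v i (x i)) := by
  have sum_le := Finset.sum_le_sum fun i hi =>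
    (h i hi).cost_mul_log_value_le (hcx i hi) (hvx i hi) (hz i hi) (hvz i hi)
  rw [Finset.sum_add_distrib, Finset.sum_sub_distrib] at sum_le
  linarith

theorem dot2_add (p x y : ℝ × ℝ) : dot2 p (x + y) = dot2 p x + dot2 p y := by
  simp only [dot2, Prod.fst_add, Prod.snd_add]
  ring

theorem dot2_le_dot2_of_nonneg_left {p x y : ℝ × ℝ} (hp : 0 ≤ p) (hxy : x ≤ y) :
    dot2 p x ≤ dot2 p y :=
  add_le_add (mul_le_mul_of_nonneg_left hxy.1 hp.1) (mul_le_mul_of_nonneg_left hxy.2 hp.2)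

theorem isBestValueOn_dot2 {a p x : ℝ × ℝ} (h₁ : dot2 p x * a.1 ≤ dot2 a x * p.1)
    (h₂ : dot2 p x * a.2 ≤ dot2 a x * p.2) :
    IsBestValueOn (dot2 a) (dot2 p) (Set.Ici 0) x := fun z hz =>
  calc dot2 p x * dot2 a z = dot2 p x * a.1 * z.1 + dot2 p x * a.2 * z.2 := by unfold dot2; ring
    _ ≤ dot2 a x * p.1 * z.1 + dot2 a x * p.2 * z.2 :=
        add_le_add (mul_le_mul_of_nonneg_right h₁ hz.1) (mul_le_mul_of_nonneg_right h₂ hz.2)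
    _ = dot2 a x * dot2 p z := by unfold dot2; ring

/-- The first consumer's bundle `x₁(α)`. -/
def firstBundle (α : ℝ) : ℝ × ℝ :=
  if α ≤ 1/3 then (3 * α, 0) else if α ≤ 2/3 then (1, 0) else (1, 3 * α - 2)

/-- The second consumer's bundle `x₂(α)`: what the first leaves of the endowment `(1, 1)`. -/
def secondBundle (α : ℝ) : ℝ × ℝ := (1, 1) - firstBundle α

/-- The equilibrium price vector `p(α)`, normalised so that the endowment `(1, 1)` costs `1`. -/
def equilibriumPrice (α : ℝ) : ℝ × ℝ :=
  if α ≤ 1/3 then (1/3, 2/3) else if α ≤ 2/3 then (α, 1 - α) else (2/3, 1/3)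

theorem firstBundle_add_secondBundle (α : ℝ) : firstBundle α + secondBundle α = (1, 1) :=
  add_sub_cancel _ _

theorem equilibriumPrice_nonneg (α : ℝ) : 0 ≤ equilibriumPrice α := by
  unfold equilibriumPrice
  split_ifs <;> constructor <;> norm_num <;> linarith

theorem dot2_equilibriumPrice_endowment (α : ℝ) : dot2 (equilibriumPrice α) (1, 1) = 1 := by
  unfold equilibriumPrice dot2
  split_ifs <;> ring

theorem dot2_equilibriumPrice_firstBundle (α : ℝ) :
    dot2 (equilibriumPrice α) (firstBundle α) = α := by
  unfold equilibriumPrice firstBundle dot2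
  split_ifs <;> ring

theorem dot2_equilibriumPrice_secondBundle (α : ℝ) :
    dot2 (equilibriumPrice α) (secondBundle α) = 1 - α := by
  rw [eq_sub_iff_add_eq', ← dot2_equilibriumPrice_endowment α, ← firstBundle_add_secondBundle α,
    dot2_add, dot2_equilibriumPrice_firstBundle]

theorem isBestValueOn_firstBundle {α : ℝ} (hα : 0 ≤ α) :
    IsBestValueOn (dot2 (2, 1)) (dot2 (equilibriumPrice α)) (Set.Ici 0) (firstBundle α) := by
  apply isBestValueOn_dot2 <;> rw [dot2_equilibriumPrice_firstBundle] <;>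
    unfold equilibriumPrice firstBundle dot2 <;> split_ifs <;> linarith

theorem isBestValueOn_secondBundle {α : ℝ} (hα : α ≤ 1) :
    IsBestValueOn (dot2 (1, 2)) (dot2 (equilibriumPrice α)) (Set.Ici 0) (secondBundle α) := by
  apply isBestValueOn_dot2 <;> rw [dot2_equilibriumPrice_secondBundle] <;>
    unfold equilibriumPrice secondBundle firstBundle dot2 <;> split_ifs <;>
    simp only [Prod.fst_sub, Prod.snd_sub] <;> linarith

theorem firstBundle_value_pos {α : ℝ} (hα : 0 < α) : 0 < dot2 (2, 1) (firstBundle α) := by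
  refine (isBestValueOn_firstBundle hα.le).value_pos (z := (1, 1)) ?_ ?_ ?_ ?_
  · rwa [dot2_equilibriumPrice_firstBundle]
  · exact ⟨zero_le_one, zero_le_one⟩
  · norm_num [dot2]
  · rw [dot2_equilibriumPrice_endowment]; exact zero_le_one

theorem secondBundle_value_pos {α : ℝ} (hα : α < 1) : 0 < dot2 (1, 2) (secondBundle α) := by
  refine (isBestValueOn_secondBundle hα.le).value_pos (z := (1, 1)) ?_ ?_ ?_ ?_
  · rwa [dot2_equilibriumPrice_secondBundle, sub_pos]
  · exact ⟨zero_le_one, zero_le_one⟩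
  · norm_num [dot2]
  · rw [dot2_equilibriumPrice_endowment]; exact zero_le_one

theorem weighted_log_value_le {α : ℝ} (hα₀ : 0 < α) (hα₁ : α < 1) {z₁ z₂ : ℝ × ℝ}
    (hz₁ : 0 ≤ z₁) (hz₂ : 0 ≤ z₂) (hfeasible : z₁ + z₂ ≤ (1, 1))
    (hv₁ : 0 < dot2 (2, 1) z₁) (hv₂ : 0 < dot2 (1, 2) z₂) :
    α * Real.log (dot2 (2, 1) z₁) + (1 - α) * Real.log (dot2 (1, 2) z₂) ≤
      α * Real.log (dot2 (2, 1) (firstBundle α)) +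
        (1 - α) * Real.log (dot2 (1, 2) (secondBundle α)) := by
  have cost_le : dot2 (equilibriumPrice α) z₁ + dot2 (equilibriumPrice α) z₂ ≤ α + (1 - α) := by
    rw [← dot2_add, add_sub_cancel, ← dot2_equilibriumPrice_endowment α]
    exact dot2_le_dot2_of_nonneg_left (equilibriumPrice_nonneg α) hfeasible
  have welfare_le := sum_cost_mul_log_value_le (t := Finset.univ)
    (v := ![dot2 (2, 1), dot2 (1, 2)]) (c := dot2 (equilibriumPrice α))
    (s := fun _ => Set.Ici 0) (x := ![firstBundle α, secondBundle α]) (z := ![z₁, z₂])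
  simp only [Finset.mem_univ, forall_const, Fin.forall_fin_two, Fin.sum_univ_two,
    Matrix.cons_val_zero, Matrix.cons_val_one, dot2_equilibriumPrice_firstBundle,
    dot2_equilibriumPrice_secondBundle] at welfare_le
  exact welfare_le ⟨isBestValueOn_firstBundle hα₀.le, isBestValueOn_secondBundle hα₁.le⟩
    ⟨hα₀.le, sub_nonneg.2 hα₁.le⟩ ⟨firstBundle_value_pos hα₀, secondBundle_value_pos hα₁⟩
    ⟨hz₁, hz₂⟩ ⟨hv₁, hv₂⟩ cost_le

/-- Example 2: the linear-utility economy with `u₁ = log(2x+y)`,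
`u₂ = log(x+2y)` and total endowment `(1,1)`. -/
theorem linear_utility_example (α : ℝ) (hα : α ∈ Set.Ioo (0:ℝ) 1)
    (u1 u2 : ℝ × ℝ → ℝ)
    (hu1 : ∀ z : ℝ × ℝ, u1 z = Real.log (2 * z.1 + z.2))
    (hu2 : ∀ z : ℝ × ℝ, u2 z = Real.log (z.1 + 2 * z.2))
    (x1 x2 p : ℝ × ℝ)
    (hx1 : x1 = if α ≤ 1/3 then ((3 * α, 0) : ℝ × ℝ)
      else if α ≤ 2/3 then (1, 0) else (1, 3 * α - 2))
    (hx2 : x2 = (1, 1) - x1)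
    (hp : p = if α ≤ 1/3 then ((1/3, 2/3) : ℝ × ℝ)
      else if α ≤ 2/3 then (α, 1 - α) else (2/3, 1/3)) :
    (∀ z1 z2 : ℝ × ℝ, 0 ≤ z1.1 → 0 ≤ z1.2 → 0 ≤ z2.1 → 0 ≤ z2.2 →
      z1.1 + z2.1 ≤ 1 → z1.2 + z2.2 ≤ 1 →
      0 < 2 * z1.1 + z1.2 → 0 < z2.1 + 2 * z2.2 →
      α * u1 z1 + (1 - α) * u2 z2 ≤ α * u1 x1 + (1 - α) * u2 x2) ∧
    (∀ z : ℝ × ℝ, 0 ≤ z.1 → 0 ≤ z.2 → 0 < 2 * z.1 + z.2 →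
      dot2 p z ≤ dot2 p x1 → u1 z ≤ u1 x1) ∧
    (∀ z : ℝ × ℝ, 0 ≤ z.1 → 0 ≤ z.2 → 0 < z.1 + 2 * z.2 →
      dot2 p z ≤ dot2 p x2 → u2 z ≤ u2 x2) := by
  obtain ⟨hα₀, hα₁⟩ := hα
  obtain rfl : x1 = firstBundle α := hx1
  obtain rfl : x2 = secondBundle α := hx2
  obtain rfl : p = equilibriumPrice α := hp
  have value₁ (z : ℝ × ℝ) : 2 * z.1 + z.2 = dot2 (2, 1) z := by simp only [dot2, one_mul]
  have value₂ (z : ℝ × ℝ) : z.1 + 2 * z.2 = dot2 (1, 2) z := by simp only [dot2, one_mul]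
  simp only [hu1, hu2, value₁, value₂]
  refine ⟨?welfare, ?demand₁, ?demand₂⟩
  case welfare =>
    intro z1 z2 h11 h12 h21 h22 hsum₁ hsum₂ hv₁ hv₂
    exact weighted_log_value_le hα₀ hα₁ ⟨h11, h12⟩ ⟨h21, h22⟩ ⟨hsum₁, hsum₂⟩ hv₁ hv₂
  case demand₁ =>
    intro z h1 h2 hv hbudget
    have income_pos := hα₀.trans_eq (dot2_equilibriumPrice_firstBundle α).symm
    exact (isBestValueOn_firstBundle hα₀.le).log_value_le_of_cost_le income_pos
      (firstBundle_value_pos hα₀).le ⟨h1, h2⟩ hv hbudget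
  case demand₂ =>
    intro z h1 h2 hv hbudget
    have income_pos := (sub_pos.2 hα₁).trans_eq (dot2_equilibriumPrice_secondBundle α).symm
    exact (isBestValueOn_secondBundle hα₁.le).log_value_le_of_cost_le income_pos
      (secondBundle_value_pos hα₁).le ⟨h1, h2⟩ hv hbudget
end
end

section
/- (Example 4: an equilibrium of the multi-equilibrium economy.) Consider two consumers with u₁(x,y) = (3/2)·x^{2/3} − (1/2)·y^{−2} and u₂(x,y) = (3/2)·y^{2/3} − (1/2)·x^{−2}, defined for strictly positive bundles, with endowments ω₁ = (11/6, 1/6) and ω₂ = (1/6, 11/6). Then the prices p = (1/2, 1/2) and the allocation x₁ = x₂ = (1,1) form a Walrasian equilibrium: x₁ + x₂ = ω₁ + ω₂ = (2,2), ⟨p, x_i⟩ = ⟨p, ω_i⟩ = 1 for i = 1,2, and each x_i maximizes u_i over the budget set { z : z₁ > 0, z₂ > 0, ⟨p,z⟩ ≤ 1 }. -/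
noncomputable section

/-!
Both utilities are sums of terms `t ^ r / r` with `r ≤ 1`. Such a term is concave with derivative
`1` at `t = 1`, so it lies below its tangent line `1 / r + (t - 1)`. Summing over the goods, the
utility gained by moving from `(1, 1)` to `z` is at most `(z₁ + z₂) - 2`, which is nonpositive on
the budget set because the two prices are equal.
-/

theorem one_add_mul_sub_one_le_rpow_of_nonpos {x r : ℝ} (hx : 0 < x) (hr : r ≤ 0) :
    1 + r * (x - 1) ≤ x ^ r :=
  calc
    1 + r * (x - 1) ≤ 1 + r * Real.log x := by
      gcongr 1 + ?_
      exact mul_le_mul_of_nonpos_left (Real.log_le_sub_one_of_pos hx) hr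
    _ ≤ Real.exp (Real.log x * r) := by
      linarith [Real.add_one_le_exp (Real.log x * r)]
    _ = x ^ r := (Real.rpow_def_of_pos hx r).symm

theorem rpow_div_self_le_one_div_add_sub_one {x r : ℝ} (hx : 0 < x) (hr₀ : r ≠ 0) (hr₁ : r ≤ 1) :
    x ^ r / r ≤ 1 / r + (x - 1) := by
  have tangent_eq : 1 / r + (x - 1) = (1 + r * (x - 1)) / r := by field_simp
  rw [tangent_eq]
  rcases hr₀.lt_or_gt with r_neg | r_pos
  · exact div_le_div_of_nonpos_of_le r_neg.le (one_add_mul_sub_one_le_rpow_of_nonpos hx r_neg.le)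
  · have bernoulli : x ^ r ≤ 1 + r * (x - 1) := by
      simpa only [add_sub_cancel] using
        rpow_one_add_le_one_add_mul_self (s := x - 1) (by linarith) r_pos.le hr₁
    gcongr

theorem dot2_smul_left (c : ℝ) (p x : ℝ × ℝ) : dot2 (c • p) x = c * dot2 p x := by
  simp only [dot2, Prod.smul_fst, Prod.smul_snd, smul_eq_mul]
  ring

/-- The additively separable utility `∑ wᵢ zᵢ ^ rᵢ / rᵢ` of a bundle of two goods. Dividing by the
exponents makes `w` the vector of marginal utilities at `(1, 1)`. A good with `rᵢ = 0` contributes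
nothing, since `x / 0 = 0`. -/
def powerUtility (w r z : ℝ × ℝ) : ℝ :=
  w.1 * (z.1 ^ r.1 / r.1) + w.2 * (z.2 ^ r.2 / r.2)

section PowerUtility

variable {w r z : ℝ × ℝ}

theorem powerUtility_le_add_dot2_sub (hw : 0 ≤ w) (hr₁ : r.1 ≠ 0) (hr₂ : r.2 ≠ 0) (hr : r ≤ 1)
    (hz₁ : 0 < z.1) (hz₂ : 0 < z.2) :
    powerUtility w r z ≤ powerUtility w r (1, 1) + (dot2 w z - dot2 w (1, 1)) := by
  have first_good := mul_le_mul_of_nonneg_left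
    (rpow_div_self_le_one_div_add_sub_one hz₁ hr₁ hr.1) hw.1
  have second_good := mul_le_mul_of_nonneg_left
    (rpow_div_self_le_one_div_add_sub_one hz₂ hr₂ hr.2) hw.2
  simp only [powerUtility, dot2, Real.one_rpow]
  linarith

-- Weights proportional to the prices are the first-order condition for an optimum at `(1, 1)`.
theorem powerUtility_smul_le_of_dot2_le {c : ℝ} {p : ℝ × ℝ} (hc : 0 ≤ c) (hp : 0 ≤ p)
    (hr₁ : r.1 ≠ 0) (hr₂ : r.2 ≠ 0) (hr : r ≤ 1) (hz₁ : 0 < z.1) (hz₂ : 0 < z.2)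
    (budget : dot2 p z ≤ dot2 p (1, 1)) :
    powerUtility (c • p) r z ≤ powerUtility (c • p) r (1, 1) := by
  have tangent := powerUtility_le_add_dot2_sub (smul_nonneg hc hp) hr₁ hr₂ hr hz₁ hz₂
  rw [dot2_smul_left, dot2_smul_left] at tangent
  linarith [mul_le_mul_of_nonneg_left budget hc]

end PowerUtility

/-- Example 4: the symmetric equilibrium of the multi-equilibrium economy. -/
theorem multi_equilibrium_example (u1 u2 : ℝ × ℝ → ℝ)
    (hu1 : ∀ z : ℝ × ℝ,
      u1 z = (3/2) * z.1 ^ ((2:ℝ)/3) - (1/2) * z.2 ^ (-2 : ℝ))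
    (hu2 : ∀ z : ℝ × ℝ,
      u2 z = (3/2) * z.2 ^ ((2:ℝ)/3) - (1/2) * z.1 ^ (-2 : ℝ))
    (ω1 ω2 : ℝ × ℝ) (hω1 : ω1 = (11/6, 1/6)) (hω2 : ω2 = (1/6, 11/6))
    (p x1 x2 : ℝ × ℝ) (hp : p = (1/2, 1/2)) (hx1 : x1 = (1, 1)) (hx2 : x2 = (1, 1)) :
    x1 + x2 = ω1 + ω2 ∧ ω1 + ω2 = (2, 2) ∧
    dot2 p x1 = 1 ∧ dot2 p x2 = 1 ∧ dot2 p ω1 = 1 ∧ dot2 p ω2 = 1 ∧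
    (∀ z : ℝ × ℝ, 0 < z.1 → 0 < z.2 → dot2 p z ≤ 1 → u1 z ≤ u1 x1) ∧
    (∀ z : ℝ × ℝ, 0 < z.1 → 0 < z.2 → dot2 p z ≤ 1 → u2 z ≤ u2 x2) := by
  subst hω1 hω2 hp hx1 hx2
  have u1_eq : u1 = powerUtility ((2 : ℝ) • (1/2, 1/2)) (2/3, -2) := by
    ext z
    simp only [hu1, powerUtility, Prod.smul_mk, smul_eq_mul]
    ring
  have u2_eq : u2 = powerUtility ((2 : ℝ) • (1/2, 1/2)) (-2, 2/3) := by
    ext z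
    simp only [hu2, powerUtility, Prod.smul_mk, smul_eq_mul]
    ring
  have prices_nonneg : (0 : ℝ × ℝ) ≤ (1/2, 1/2) := by constructor <;> norm_num
  have expenditure_one : dot2 (1/2, 1/2) (1, 1) = 1 := by norm_num [dot2]
  refine ⟨by norm_num, by norm_num, expenditure_one, expenditure_one, by norm_num [dot2],
    by norm_num [dot2], fun z hz₁ hz₂ budget ↦ ?_, fun z hz₁ hz₂ budget ↦ ?_⟩
  · rw [u1_eq]
    exact powerUtility_smul_le_of_dot2_le zero_le_two prices_nonneg (by norm_num) (by norm_num)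
      (by constructor <;> norm_num) hz₁ hz₂ (budget.trans_eq expenditure_one.symm)
  · rw [u2_eq]
    exact powerUtility_smul_le_of_dot2_le zero_le_two prices_nonneg (by norm_num) (by norm_num)
      (by constructor <;> norm_num) hz₁ hz₂ (budget.trans_eq expenditure_one.symm)
end
end
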